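/- arXiv:hep-th/9307164 — 3 statements merged into one kernel-verified Lean document; each statement's English description precedes it below -/
import Mathlib

section
/- Let I be a finite type and N : I → I → I → ℕ fusion-rule data satisfying associativity, Σ_{l} N x y l · N l z m = Σ_{l} N y z l · N x l m for all x, y, z, m ∈ I, and commutativity, N x y z = N y x z for all x, y, z ∈ I. Define D x := Σ_{(s,r) ∈ I × I} N x s r. Then for all x, y ∈ I: D x · D y ≥ Σ_{z ∈ I} (N x y z) · D z. -/
open Finset

/-!
Let `L x` be the matrix with entries `N x s r`, so that `D x` is the sum of the entries of `L x`.
Associativity says that `L y * L x = ∑ z, N x y z • L z`. The sum of the entries is linear and, on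
matrices with nonnegative entries, submultiplicative: in the expansion of `D y * D x` the entries
of `L y * L x` account for the products in which the column of the first factor is the row of the
second, and the remaining products are nonnegative.
-/

theorem sum_mul_le_sum_mul_sum_of_nonneg {ι R : Type*} [Semiring R] [PartialOrder R]
    [IsOrderedRing R] {s : Finset ι} {f g : ι → R} (hf : ∀ i ∈ s, 0 ≤ f i)
    (hg : ∀ i ∈ s, 0 ≤ g i) : ∑ i ∈ s, f i * g i ≤ (∑ i ∈ s, f i) * ∑ i ∈ s, g i := by
  rw [sum_mul]
  exact sum_le_sum fun i hi => mul_le_mul_of_nonneg_left (single_le_sum hg hi) (hf i hi)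

section EntrySum

variable {l m n R : Type*} [Fintype m] [Fintype n]

/-- The sum of all entries of a matrix. Applied to the fusion matrix of `x` it gives the weak
dimension `D x`; the sum runs over pairs of indices to agree with the usual form of `D`. -/
def entrySum [AddCommMonoid R] (A : Matrix m n R) : R :=
  ∑ p : m × n, A p.1 p.2

theorem entrySum_sum_smul {ι S : Type*} [AddCommMonoid R] [DistribSMul S R] (s : Finset ι)
    (c : ι → S) (A : ι → Matrix m n R) :
    entrySum (∑ i ∈ s, c i • A i) = ∑ i ∈ s, c i • entrySum (A i) := by
  simp only [entrySum, Matrix.sum_apply, Matrix.smul_apply, Finset.smul_sum]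
  exact sum_comm

variable [Fintype l]

theorem entrySum_mul [NonUnitalNonAssocSemiring R] (A : Matrix m l R) (B : Matrix l n R) :
    entrySum (A * B) = ∑ k, (∑ i, A i k) * ∑ j, B k j :=
  calc entrySum (A * B) = ∑ k, ∑ p : m × n, A p.1 k * B k p.2 := sum_comm
    _ = ∑ k, (∑ i, A i k) * ∑ j, B k j := by
      simp only [Fintype.sum_prod_type, Fintype.sum_mul_sum]

theorem entrySum_mul_le [Semiring R] [PartialOrder R] [IsOrderedRing R] {A : Matrix m l R}
    {B : Matrix l n R} (hA : ∀ i k, 0 ≤ A i k) (hB : ∀ k j, 0 ≤ B k j) :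
    entrySum (A * B) ≤ entrySum A * entrySum B :=
  calc entrySum (A * B) = ∑ k, (∑ i, A i k) * ∑ j, B k j := entrySum_mul A B
    _ ≤ (∑ k, ∑ i, A i k) * ∑ k, ∑ j, B k j :=
      sum_mul_le_sum_mul_sum_of_nonneg (fun k _ => sum_nonneg fun i _ => hA i k)
        fun k _ => sum_nonneg fun j _ => hB k j
    _ = entrySum A * entrySum B := by
      rw [entrySum, entrySum, Fintype.sum_prod_type_right, Fintype.sum_prod_type]

end EntrySum

section FusionMatrix

variable {I R : Type*}

/-- The fusion matrix of `x`: the matrix of left multiplication by `x` in the basis `I` of the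
fusion ring. Row `s` lists the coefficients of the product of `x` and `s`, so matrices act on row
vectors from the right and products appear in reversed order. -/
def fusionMatrix (N : I → I → I → R) (x : I) : Matrix I I R :=
  Matrix.of (N x)

theorem fusionMatrix_mul_fusionMatrix [Fintype I] [NonUnitalNonAssocSemiring R]
    {N : I → I → I → R}
    (hassoc : ∀ x y z m, ∑ l, N x y l * N l z m = ∑ l, N y z l * N x l m) (x y : I) :
    fusionMatrix N y * fusionMatrix N x = ∑ z, N x y z • fusionMatrix N z := by
  ext s r
  simpa only [fusionMatrix, Matrix.mul_apply, Matrix.sum_apply, Matrix.smul_apply, Matrix.of_apply,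
    smul_eq_mul] using (hassoc x y s r).symm

end FusionMatrix

theorem stmt5_general {I R : Type*} [Fintype I] [Semiring R] [PartialOrder R] [IsOrderedRing R]
    {N : I → I → I → R} (hN : ∀ x y z, 0 ≤ N x y z)
    (hassoc : ∀ x y z m, ∑ l, N x y l * N l z m = ∑ l, N y z l * N x l m) (x y : I) :
    ∑ z, N x y z * ∑ p : I × I, N z p.1 p.2 ≤
      (∑ p : I × I, N y p.1 p.2) * ∑ p : I × I, N x p.1 p.2 :=
  calc ∑ z, N x y z * ∑ p : I × I, N z p.1 p.2
      = entrySum (∑ z, N x y z • fusionMatrix N z) :=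
        (entrySum_sum_smul univ (N x y) (fusionMatrix N)).symm
    _ = entrySum (fusionMatrix N y * fusionMatrix N x) := by
        rw [fusionMatrix_mul_fusionMatrix hassoc]
    _ ≤ entrySum (fusionMatrix N y) * entrySum (fusionMatrix N x) :=
        entrySum_mul_le (hN y) (hN x)

/-- For associative and commutative fusion-rule data `N` on a finite type `I`, the
function `D x = ∑_{s,r} N x s r` is a weak dimension function:
`D x * D y ≥ ∑_z N x y z * D z`. -/
theorem stmt5 (I : Type*) [Fintype I] (N : I → I → I → ℕ)
    (hassoc : ∀ x y z m : I,
      ∑ l : I, N x y l * N l z m = ∑ l : I, N y z l * N x l m)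
    (hcomm : ∀ x y z : I, N x y z = N y x z) :
    ∀ x y : I,
      (∑ z : I, N x y z * ∑ p : I × I, N z p.1 p.2) ≤
        (∑ p : I × I, N x p.1 p.2) * (∑ p : I × I, N y p.1 p.2) :=
  fun x y => (stmt5_general (fun _ _ _ => Nat.zero_le _) hassoc x y).trans_eq (mul_comm _ _)
end

section
/- Let k be an algebraically closed field and A a finite-dimensional semisimple k-algebra. Let (S_i)_{i ∈ ι} be a complete irredundant family of representatives of the isomorphism classes of simple A-modules (each finite-dimensional over k). Then the k-algebra homomorphism A → Π_{i ∈ ι} End_k(S_i), sending a ∈ A to the family of k-linear maps (m ↦ a • m)_{i ∈ ι}, is bijective. -/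
universe u

/-!
Over a semisimple ring `R` every module `M` is finitely generated over `End R M`: the module `R` is
a finite direct sum of simple modules `T`, and each `T →ₗ[R] M` is cyclic over `End R M` because
maps extend along embeddings into semisimple modules. By Jacobson density `R` therefore surjects
onto the double centralizer of every module. Applied to the direct sum of the `S i`, whose
endomorphisms are diagonal with scalar entries by Schur's lemma, this gives surjectivity;
injectivity holds because `R`, being a sum of simple left ideals, acts faithfully on the family of
its simple modules.
-/

open Module

section DoubleCentralizer

variable {R : Type*} [Ring R]

theorem finite_moduleEnd_linearMap_of_isSimpleModule (T M : Type*) [AddCommGroup T] [Module R T]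
    [IsSimpleModule R T] [AddCommGroup M] [Module R M] [IsSemisimpleModule R M] :
    Module.Finite (End R M) (T →ₗ[R] M) := by
  rcases subsingleton_or_nontrivial (T →ₗ[R] M) with _ | _
  · infer_instance
  obtain ⟨h, h_ne⟩ := exists_ne (0 : T →ₗ[R] M)
  have h_inj : Function.Injective h := LinearMap.injective_of_ne_zero h_ne
  refine .of_surjective (LinearMap.toSpanSingleton (End R M) _ h) fun g => ?_
  exact IsSemisimpleModule.extension_property h h_inj g

theorem finite_moduleEnd_linearMap (N M : Type*) [AddCommGroup N] [Module R N] [Module.Finite R N]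
    [IsSemisimpleModule R N] [AddCommGroup M] [Module R M] [IsSemisimpleModule R M] :
    Module.Finite (End R M) (N →ₗ[R] M) := by
  classical
  obtain ⟨n, T, e, hT⟩ := IsSemisimpleModule.exists_linearEquiv_fin_dfinsupp R N
  have hfin (j : Fin n) : Module.Finite (End R M) (T j →ₗ[R] M) :=
    finite_moduleEnd_linearMap_of_isSimpleModule (T j) M
  exact .equiv ((DFinsupp.lsum (End R M)).trans (e.symm.congrLeft M (End R M)))

theorem finite_moduleEnd_of_isSemisimpleRing [IsSemisimpleRing R] (M : Type*) [AddCommGroup M]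
    [Module R M] : Module.Finite (End R M) M :=
  have := finite_moduleEnd_linearMap (R := R) R M
  .equiv (LinearMap.ringLmapEquivSelf R (End R M) M)

theorem toModuleEnd_surjective_of_isSemisimpleRing [IsSemisimpleRing R] (M : Type*)
    [AddCommGroup M] [Module R M] :
    Function.Surjective (toModuleEnd (End R M) (S := R) M) :=
  have := finite_moduleEnd_of_isSemisimpleRing (R := R) M
  Module.Finite.toModuleEnd_moduleEnd_surjective

end DoubleCentralizer

theorem eq_comp_lsingle_comp_lapply {R ι N : Type*} {S : ι → Type*} [Semiring R] [DecidableEq ι]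
    [∀ i, AddCommMonoid (S i)] [∀ i, Module R (S i)] [AddCommMonoid N] [Module R N]
    (f : (Π₀ i, S i) →ₗ[R] N) {i : ι}
    (h_zero : ∀ j, j ≠ i → f ∘ₗ DFinsupp.lsingle j = 0) :
    f = f ∘ₗ DFinsupp.lsingle i ∘ₗ DFinsupp.lapply i := by
  refine DFinsupp.lhom_ext fun j x => ?_
  rcases eq_or_ne j i with rfl | hj
  · simp
  · simpa [hj] using LinearMap.congr_fun (h_zero j hj) x

theorem toModuleEnd_pi_surjective_of_hom_eq_zero {R ι : Type*} {S : ι → Type*} [Ring R]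
    [IsSemisimpleRing R] [∀ i, AddCommGroup (S i)] [∀ i, Module R (S i)]
    (h_orth : ∀ i j, i ≠ j → ∀ h : S i →ₗ[R] S j, h = 0) :
    Function.Surjective (fun (r : R) (i : ι) => toModuleEnd (End R (S i)) (S i) r) := by
  classical
  intro f
  let F : End (End R (Π₀ i, S i)) (Π₀ i, S i) :=
    { toFun := DFinsupp.mapRange (fun i => f i) fun i => map_zero (f i)
      map_add' := DFinsupp.mapRange_add _ _ fun i => map_add (f i)
      map_smul' := fun g x => by
        ext i
        let gᵢ : End R (S i) := DFinsupp.lapply i ∘ₗ g ∘ₗ DFinsupp.lsingle i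
        have h_diag (y : Π₀ i, S i) : g y i = gᵢ (y i) := LinearMap.congr_fun
          (eq_comp_lsingle_comp_lapply (DFinsupp.lapply i ∘ₗ g) fun j hj => h_orth j i hj _) y
        simp only [RingHom.id_apply, End.smul_def, DFinsupp.mapRange_apply, h_diag]
        exact map_smul (f i) gᵢ (x i) }
  obtain ⟨r, hr⟩ := toModuleEnd_surjective_of_isSemisimpleRing (R := R) (Π₀ i, S i) F
  refine ⟨r, funext fun i => LinearMap.ext fun x => ?_⟩
  have h := DFunLike.congr_fun (LinearMap.congr_fun hr (DFinsupp.single i x)) i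
  simpa [F] using h

theorem mem_annihilator_of_forall_isSimpleModule {R M : Type*} [Ring R] [AddCommGroup M]
    [Module R M] [IsSemisimpleModule R M] {a : R}
    (h : ∀ N : Submodule R M, IsSimpleModule R N → a ∈ annihilator R N) :
    a ∈ annihilator R M := by
  rw [← Submodule.annihilator_top, ← IsSemisimpleModule.sSup_simples_eq_top, sSup_eq_iSup',
    Submodule.annihilator_iSup, Submodule.mem_iInf]
  exact fun N => h N N.2

theorem eq_zero_of_forall_isSimpleModule_ideal {R : Type*} [Ring R] [IsSemisimpleRing R] {a : R}
    (h : ∀ I : Ideal R, IsSimpleModule R I → a ∈ annihilator R I) : a = 0 := by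
  simpa using mem_annihilator.mp (mem_annihilator_of_forall_isSimpleModule h) 1

theorem stmt8_general {k A ι : Type*} [CommSemiring k] [Ring A] [Algebra k A]
    [IsSemisimpleRing A] (S : ι → Type*) [∀ i, AddCommGroup (S i)] [∀ i, Module A (S i)]
    [∀ i, Module k (S i)] [∀ i, IsScalarTower k A (S i)] [∀ i, SMulCommClass A k (S i)]
    [∀ i, IsSimpleModule A (S i)]
    (h_scalar : ∀ i, Function.Surjective (algebraMap k (End A (S i))))
    (hirr : ∀ i j : ι, Nonempty (S i ≃ₗ[A] S j) → i = j)
    (hcomplete : ∀ I : Ideal A, IsSimpleModule A I → ∃ i, Nonempty (I ≃ₗ[A] S i)) :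
    Function.Bijective
      (fun (a : A) (i : ι) => DistribSMul.toLinearMap k (S i) a) := by
  constructor
  · intro a b hab
    have h_sub (i : ι) : a - b ∈ annihilator A (S i) := mem_annihilator.mpr fun x => by
      rw [sub_smul, sub_eq_zero]
      exact LinearMap.congr_fun (congrFun hab i) x
    refine sub_eq_zero.mp (eq_zero_of_forall_isSimpleModule_ideal fun I hI => ?_)
    obtain ⟨i, ⟨e⟩⟩ := hcomplete I hI
    exact e.annihilator_eq ▸ h_sub i
  · intro f
    have h_orth (i j : ι) (hij : i ≠ j) (h : S i →ₗ[A] S j) : h = 0 :=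
      h.bijective_or_eq_zero.resolve_left fun hb => hij (hirr i j ⟨.ofBijective h hb⟩)
    let f' (i : ι) : End (End A (S i)) (S i) :=
      { f i with
        map_smul' := fun g x => by
          obtain ⟨c, rfl⟩ := h_scalar i g
          exact map_smul (f i) c x }
    obtain ⟨a, ha⟩ := toModuleEnd_pi_surjective_of_hom_eq_zero h_orth f'
    exact ⟨a, funext fun i => LinearMap.ext fun x => LinearMap.congr_fun (congrFun ha i) x⟩

/-- Let `k` be an algebraically closed field and `A` a finite-dimensional semisimple
`k`-algebra.  For a complete irredundant family `S i` of representatives of the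
isomorphism classes of simple `A`-modules (each finite-dimensional over `k`), the
canonical `k`-algebra homomorphism `A → Π i, End_k (S i)`, `a ↦ (m ↦ a • m)`, is
bijective. -/
theorem stmt8 (k : Type u) [Field k] [IsAlgClosed k]
    (A : Type u) [Ring A] [Algebra k A] [FiniteDimensional k A] [IsSemisimpleRing A]
    (ι : Type u) (S : ι → Type u)
    [∀ i, AddCommGroup (S i)] [∀ i, Module A (S i)] [∀ i, Module k (S i)]
    [∀ i, IsScalarTower k A (S i)] [∀ i, SMulCommClass A k (S i)]
    [∀ i, FiniteDimensional k (S i)] [∀ i, IsSimpleModule A (S i)]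
    (hirr : ∀ i j : ι, Nonempty (S i ≃ₗ[A] S j) → i = j)
    (hcomplete : ∀ (M : Type u) [AddCommGroup M] [Module A M],
      IsSimpleModule A M → ∃ i, Nonempty (M ≃ₗ[A] S i)) :
    Function.Bijective
      (fun a : A => (fun i => DistribMulAction.toLinearMap k (S i) a :
        ∀ i, S i →ₗ[k] S i)) :=
  stmt8_general S (fun _ => (IsSimpleModule.algebraMap_end_bijective_of_isAlgClosed k).surjective)
    hirr fun I hI => hcomplete I hI
end

section
/- Let k be a field and A a finite-dimensional k-algebra. Consider the forgetful functor V from the category of finite-dimensional A-modules to the category of k-vector spaces, and the canonical k-algebra homomorphism i from A to the algebra of natural endomorphisms of V, sending a ∈ A to the natural transformation whose component at a module M is the k-linear map m ↦ a • m. Then i is injective; and if moreover A is a semisimple algebra, then i is bijective. -/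
universe u

/-! Naturality along the `A`-linear map `A → M`, `a ↦ a • m`, at the element `1` forces a natural
endomorphism `h` to satisfy `h_M m = h_A 1 • m`, as in the Yoneda lemma. So evaluating at `1` in
the regular module inverts the canonical map from `A`. -/

universe v

/-- The objects of the category of `A`-modules that are finite over `k`. The `k`-module structure is
a field compatible with that of `A`, rather than being obtained by restriction of scalars; modules
live in the universe of `A`, so that the regular module is one of them. -/
structure FinMod (k : Type v) (A : Type u) [CommRing k] [Ring A] [Algebra k A] where
  carrier : Type u
  [addCommGroup : AddCommGroup carrier]
  [moduleAlgebra : Module A carrier]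
  [moduleBase : Module k carrier]
  [isScalarTower : IsScalarTower k A carrier]
  [finite : Module.Finite k carrier]

namespace FinMod

variable (k : Type v) (A : Type u) [CommRing k] [Ring A] [Algebra k A]

instance : CoeSort (FinMod k A) (Type u) := ⟨carrier⟩

attribute [instance] addCommGroup moduleAlgebra moduleBase isScalarTower finite

/-- The algebra of natural endomorphisms of the forgetful functor from `FinMod k A` to `k`-modules,
as a subalgebra of the product of the endomorphism algebras of all the modules. -/
def forgetEnd : Subalgebra k (∀ M : FinMod k A, Module.End k M) where
  carrier := {h | ∀ (M M' : FinMod k A) (f : M →ₗ[A] M') (m : M), h M' (f m) = f (h M m)}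
  mul_mem' hg hh M M' f m := by simp [hh M M' f, hg M M' f]
  add_mem' hg hh M M' f m := by simp [hg M M' f, hh M M' f]
  algebraMap_mem' c M M' f m := by simp [Module.algebraMap_end_apply]

/-- The canonical algebra homomorphism `i`, sending `a` to the action of `a` on every module. -/
def smulHom : A →ₐ[k] forgetEnd k A :=
  (AlgHom.pi fun M : FinMod k A => Algebra.lsmul k k M).codRestrict (forgetEnd k A)
    fun a _ _ f m => (f.map_smul a m).symm

variable {k A} in
theorem smulHom_eq_iff {a : A} {h : forgetEnd k A} :
    smulHom k A a = h ↔ ∀ (M : FinMod k A) (m : M), a • m = h.1 M m := by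
  rw [Subtype.ext_iff, funext_iff]
  exact forall_congr' fun _ => LinearMap.ext_iff

section Regular

variable [Module.Finite k A]

/-- The regular module, which represents the forgetful functor. -/
abbrev regular : FinMod k A := ⟨A⟩

variable {k A}

/-- The value at `1` of the component of `h` at the regular module; this is the inverse of the
canonical homomorphism `smulHom`. -/
def evalOne (h : forgetEnd k A) : A := h.1 (regular k A) (1 : A)

theorem forgetEnd_apply_eq_evalOne_smul (h : forgetEnd k A) (M : FinMod k A) (m : M) :
    h.1 M m = evalOne h • m := by
  simpa [evalOne] using h.2 (regular k A) M (LinearMap.toSpanSingleton A M m) (1 : A)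

theorem evalOne_smulHom (a : A) : evalOne (smulHom k A a) = a :=
  mul_one a

theorem smulHom_evalOne (h : forgetEnd k A) : smulHom k A (evalOne h) = h :=
  smulHom_eq_iff.mpr fun M m => (forgetEnd_apply_eq_evalOne_smul h M m).symm

variable (k A)

theorem smulHom_bijective : Function.Bijective (smulHom k A) :=
  Function.bijective_iff_has_inverse.mpr ⟨evalOne, evalOne_smulHom, smulHom_evalOne⟩

end Regular

end FinMod

open FinMod in
theorem stmt13_general (k : Type v) [CommRing k] (A : Type u) [Ring A] [Algebra k A]
    [Module.Finite k A] :
    (∀ a b : A,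
      (∀ (M : Type u) [AddCommGroup M] [Module A M] [Module k M] [IsScalarTower k A M]
        [Module.Finite k M] (m : M), a • m = b • m) → a = b) ∧
    (∀ h : ∀ (M : Type u) [AddCommGroup M] [Module A M] [Module k M] [IsScalarTower k A M]
        [Module.Finite k M], M →ₗ[k] M,
      (∀ (M M' : Type u) [AddCommGroup M] [Module A M] [Module k M] [IsScalarTower k A M]
          [Module.Finite k M] [AddCommGroup M'] [Module A M'] [Module k M']
          [IsScalarTower k A M'] [Module.Finite k M'] (f : M →ₗ[A] M') (m : M),
        h M' (f m) = f (h M m)) →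
      ∃ a : A, ∀ (M : Type u) [AddCommGroup M] [Module A M] [Module k M]
          [IsScalarTower k A M] [Module.Finite k M] (m : M),
        h M m = a • m) := by
  refine ⟨fun a b hab => (smulHom_bijective k A).injective ?_, fun h hn => ?_⟩
  · exact smulHom_eq_iff.mpr fun M m => hab M m
  · obtain ⟨a, ha⟩ := (smulHom_bijective k A).surjective ⟨fun M => h M, fun M M' => hn M M'⟩
    exact ⟨a, fun M _ _ _ _ _ m => (smulHom_eq_iff.mp ha ⟨M⟩ m).symm⟩

/-- Let `k` be a field and `A` a finite-dimensional `k`-algebra.  The canonical map `i`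
from `A` to the algebra of natural endomorphisms of the forgetful functor from
finite-dimensional `A`-modules to `k`-vector spaces (sending `a` to the family of
`k`-linear maps `m ↦ a • m`) is injective; if moreover `A` is semisimple, every natural
endomorphism of the forgetful functor is of this form, i.e. `i` is bijective. -/
theorem stmt13 (k : Type u) [Field k] (A : Type u) [Ring A] [Algebra k A]
    [FiniteDimensional k A] :
    (∀ a b : A,
      (∀ (M : Type u) [AddCommGroup M] [Module A M] [Module k M] [IsScalarTower k A M]
        [FiniteDimensional k M] (m : M), a • m = b • m) → a = b) ∧
    (IsSemisimpleRing A →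
      ∀ h : ∀ (M : Type u) [AddCommGroup M] [Module A M] [Module k M] [IsScalarTower k A M]
          [FiniteDimensional k M], M →ₗ[k] M,
        (∀ (M M' : Type u) [AddCommGroup M] [Module A M] [Module k M] [IsScalarTower k A M]
            [FiniteDimensional k M] [AddCommGroup M'] [Module A M'] [Module k M']
            [IsScalarTower k A M'] [FiniteDimensional k M'] (f : M →ₗ[A] M') (m : M),
          h M' (f m) = f (h M m)) →
        ∃ a : A, ∀ (M : Type u) [AddCommGroup M] [Module A M] [Module k M]
            [IsScalarTower k A M] [FiniteDimensional k M] (m : M),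
          h M m = a • m) :=
  ⟨(stmt13_general k A).1, fun _ => (stmt13_general k A).2⟩
end
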